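/- Let r ≥ 2 be an integer and let G be a simple graph on a finite vertex set containing no clique of size r+1. For a vertex v of G, let f(v) be the number of unordered pairs {x, y} of distinct non-adjacent vertices with x, y ∈ N(v) such that the subgraph of G induced on N(x) ∩ N(y) ∩ N(v) contains a clique of size r-2. Then for every vertex v, f(v) ≤ C(d(v)-r+2, 2), where d(v) is the degree of v, C(·,2) is the binomial coefficient, and d(v)-r+2 is interpreted with truncated subtraction (so the bound is 0 when d(v) ≤ r-1). -/

import Mathlib

open SimpleGraph

/-- `f G r v` is the number of unordered pairs `{x, y}` of distinct non-adjacent vertices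
with `x, y ∈ N(v)` such that the subgraph of `G` induced on `N(x) ∩ N(y) ∩ N(v)`
contains a clique of size `r - 2`. -/
noncomputable def f {V : Type*} (G : SimpleGraph V) (r : ℕ) (v : V) : ℕ :=
  Set.ncard {e : Sym2 V | ∃ x y : V, e = s(x, y) ∧ x ≠ y ∧ ¬ G.Adj x y ∧
    G.Adj v x ∧ G.Adj v y ∧
    ¬ (G.induce (G.neighborSet x ∩ G.neighborSet y ∩ G.neighborSet v)).CliqueFree (r - 2)}


lemma boll_aux {V ι : Type*} [DecidableEq V] (A : ι → Finset V) :
    ∀ (n : ℕ) (X : Finset V) (I : Finset ι) (B : ι → Finset V), X.card = n →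
    (∀ i ∈ I, A i ⊆ X) → (∀ i ∈ I, B i ⊆ X) → (∀ i ∈ I, (A i).card = 2) →
    (∀ i ∈ I, Disjoint (A i) (B i)) →
    (∀ i ∈ I, ∀ j ∈ I, i ≠ j → ¬ Disjoint (A i) (B j)) →
    ∑ i ∈ I, (2 : ℚ) / ((((B i).card : ℚ) + 2) * ((B i).card + 1)) ≤ 1 := by
  classical
  intro n
  induction n with
  | zero =>
    intro X I B hX hA hB hc hd hx
    have : I = ∅ := by
      rw [Finset.eq_empty_iff_forall_notMem]
      intro i hi
      have h1 := Finset.card_le_card (hA i hi)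
      have h2 := hc i hi
      omega
    simp [this]
  | succ n ih =>
    intro X I B hX hA hB hc hd hx
    by_cases h0 : ∃ i ∈ I, B i = ∅
    · obtain ⟨i, hi, hBi⟩ := h0
      have : I = {i} := by
        rw [Finset.eq_singleton_iff_unique_mem]
        refine ⟨hi, fun j hj => ?_⟩
        by_contra hne
        exact hx j hj i hi hne (by simp [hBi])
      rw [this]
      simp [hBi]
    · push Not at h0
      have key : ∀ x ∈ X, ∑ i ∈ I.filter (fun i => x ∉ A i),
          (2 : ℚ) / (((((B i).erase x).card : ℚ) + 2) * (((B i).erase x).card + 1)) ≤ 1 := by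
        intro x hxX
        apply ih (X.erase x) (I.filter (fun i => x ∉ A i)) (fun i => (B i).erase x)
        · rw [Finset.card_erase_of_mem hxX, hX]; rfl
        · intro i hi
          rw [Finset.mem_filter] at hi
          exact Finset.subset_erase.2 ⟨hA i hi.1, hi.2⟩
        · intro i hi
          rw [Finset.mem_filter] at hi
          exact Finset.erase_subset_erase _ (hB i hi.1)
        · intro i hi
          exact hc i (Finset.mem_filter.1 hi).1
        · intro i hi
          exact (hd i (Finset.mem_filter.1 hi).1).mono_right (Finset.erase_subset _ _)
        · intro i hi j hj hij hdis
          rw [Finset.mem_filter] at hi hj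
          apply hx i hi.1 j hj.1 hij
          rw [Finset.disjoint_left] at hdis ⊢
          intro a ha hb
          refine hdis ha (Finset.mem_erase.2 ⟨?_, hb⟩)
          rintro rfl
          exact hi.2 ha
      have hsum := Finset.sum_le_sum key
      simp only [Finset.sum_filter] at hsum
      rw [Finset.sum_comm] at hsum
      have each : ∀ i ∈ I, ∑ x ∈ X, (if x ∉ A i then
          (2 : ℚ) / (((((B i).erase x).card : ℚ) + 2) * (((B i).erase x).card + 1)) else 0)
          = (n + 1) * ((2 : ℚ) / ((((B i).card : ℚ) + 2) * ((B i).card + 1))) := by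
        intro i hi
        have hb : 1 ≤ (B i).card := Finset.card_pos.2 (h0 i hi)
        rw [← Finset.sum_filter]
        have hXA : X.filter (fun x => x ∉ A i) = X \ A i := by
          ext; simp
        have hBX : B i ⊆ X \ A i := by
          intro a ha
          exact Finset.mem_sdiff.2 ⟨hB i hi ha, fun h => Finset.disjoint_left.1 (hd i hi) h ha⟩
        have hcard : ((X \ A i) \ B i).card + (B i).card + 2 = n + 1 := by
          rw [Finset.card_sdiff_add_card_eq_card hBX, ← hc i hi,
            Finset.card_sdiff_add_card_eq_card (hA i hi), hX]
        rw [hXA, ← Finset.sum_sdiff hBX]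
        have e1 : ∀ x ∈ (X \ A i) \ B i,
            (2 : ℚ) / (((((B i).erase x).card : ℚ) + 2) * (((B i).erase x).card + 1))
            = (2 : ℚ) / ((((B i).card : ℚ) + 2) * ((B i).card + 1)) := by
          intro x hx'
          rw [Finset.erase_eq_of_notMem (Finset.mem_sdiff.1 hx').2]
        have e2 : ∀ x ∈ B i,
            (2 : ℚ) / (((((B i).erase x).card : ℚ) + 2) * (((B i).erase x).card + 1))
            = (2 : ℚ) / ((((B i).card : ℚ) + 1) * ((B i).card)) := by
          intro x hx'
          rw [Finset.card_erase_of_mem hx', Nat.cast_sub hb]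
          congr 1
          push_cast
          ring
        rw [Finset.sum_congr rfl e1, Finset.sum_congr rfl e2]
        simp only [Finset.sum_const, nsmul_eq_mul]
        have hq : (((X \ A i) \ B i).card : ℚ) = n + 1 - 2 - (B i).card := by
          have : (((X \ A i) \ B i).card : ℚ) + (B i).card + 2 = n + 1 := by exact_mod_cast hcard
          linarith
        rw [hq]
        have hbq : (0 : ℚ) < (B i).card := by exact_mod_cast hb
        generalize ((B i).card : ℚ) = b at *
        field_simp
        ring
      rw [Finset.sum_congr rfl each, ← Finset.mul_sum] at hsum
      simp only [Finset.sum_const, nsmul_eq_mul, hX] at hsum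
      push_cast at hsum
      have hn : (0 : ℚ) < n + 1 := by positivity
      exact le_of_mul_le_mul_left hsum hn

theorem stmt_9 {V : Type*} [Fintype V] [DecidableEq V] (r : ℕ) (hr : 2 ≤ r)
    (G : SimpleGraph V) [DecidableRel G.Adj] (hfree : G.CliqueFree (r + 1)) :
    ∀ v : V, f G r v ≤ (G.degree v + 2 - r).choose 2 := by
  classical
  intro v
  unfold f
  set S : Set (Sym2 V) := {e : Sym2 V | ∃ x y : V, e = s(x, y) ∧ x ≠ y ∧ ¬ G.Adj x y ∧
    G.Adj v x ∧ G.Adj v y ∧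
    ¬ (G.induce (G.neighborSet x ∩ G.neighborSet y ∩ G.neighborSet v)).CliqueFree (r - 2)}
    with hS
  have hex : ∀ e : Sym2 V, ∃ K : Finset V, e ∈ S →
      e.toFinset.card = 2 ∧ e.toFinset ⊆ G.neighborFinset v ∧ K ⊆ G.neighborFinset v ∧
      K.card = r - 2 ∧ Disjoint e.toFinset K ∧
      (∀ a b, a ≠ b → ¬ G.Adj a b → a ∈ e.toFinset ∪ K → b ∈ e.toFinset ∪ K → e = s(a, b)) ∧
      (∃ a b, e = s(a, b) ∧ a ≠ b ∧ ¬ G.Adj a b) := by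
    intro e
    by_cases he : e ∈ S
    · obtain ⟨x, y, rfl, hxy, hadj, hvx, hvy, hcl⟩ := he
      simp only [SimpleGraph.CliqueFree, not_forall, not_not] at hcl
      obtain ⟨t, ht⟩ := hcl
      have hK : ∀ a ∈ t.map (Function.Embedding.subtype _), G.Adj x a ∧ G.Adj y a ∧ G.Adj v a := by
        intro a ha
        rw [Finset.mem_map] at ha
        obtain ⟨⟨b, hb⟩, -, rfl⟩ := ha
        exact ⟨hb.1.1, hb.1.2, hb.2⟩
      have hKc : ∀ a ∈ t.map (Function.Embedding.subtype _),
          ∀ b ∈ t.map (Function.Embedding.subtype _), a ≠ b → G.Adj a b := by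
        intro a ha b hb hab
        rw [Finset.mem_map] at ha hb
        obtain ⟨a', ha', rfl⟩ := ha
        obtain ⟨b', hb', rfl⟩ := hb
        exact ht.1 ha' hb' (fun h => hab (by rw [h]))
      refine ⟨t.map (Function.Embedding.subtype _), fun _ => ?_⟩
      have hcard : (t.map (Function.Embedding.subtype _)).card = r - 2 := by
        rw [Finset.card_map]; exact ht.2
      generalize t.map (Function.Embedding.subtype _) = K at *
      have hfs : (s(x, y)).toFinset = {x, y} := by ext; simp
      rw [hfs]
      refine ⟨Finset.card_pair hxy, ?_, ?_, hcard, ?_, ?_, x, y, rfl, hxy, hadj⟩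
      · intro a ha
        simp only [Finset.mem_insert, Finset.mem_singleton] at ha
        rw [SimpleGraph.mem_neighborFinset]
        rcases ha with rfl | rfl <;> assumption
      · intro a ha
        rw [SimpleGraph.mem_neighborFinset]
        exact (hK a ha).2.2
      · rw [Finset.disjoint_left]
        intro a ha hb
        simp only [Finset.mem_insert, Finset.mem_singleton] at ha
        rcases ha with rfl | rfl
        · exact G.loopless.irrefl _ (hK _ hb).1
        · exact G.loopless.irrefl _ (hK _ hb).2.1
      · intro a b hab hnadj ha hb
        simp only [Finset.mem_union, Finset.mem_insert, Finset.mem_singleton] at ha hb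
        rcases ha with (rfl | rfl) | ha <;> rcases hb with (rfl | rfl) | hb
        · exact absurd rfl hab
        · rfl
        · exact absurd (hK _ hb).1 hnadj
        · exact Sym2.eq_swap
        · exact absurd rfl hab
        · exact absurd (hK _ hb).2.1 hnadj
        · exact absurd (hK _ ha).1.symm hnadj
        · exact absurd (hK _ ha).2.1.symm hnadj
        · exact absurd (hKc _ ha _ hb hab) hnadj
    · exact ⟨∅, fun h => absurd h he⟩
  choose K hK using hex
  rw [Set.ncard_eq_toFinset_card']
  have main := boll_aux (fun e : Sym2 V => e.toFinset) _ (G.neighborFinset v) S.toFinset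
    (fun e => G.neighborFinset v \ (e.toFinset ∪ K e)) rfl
    (fun e he => (hK e (Set.mem_toFinset.1 he)).2.1)
    (fun e he => Finset.sdiff_subset)
    (fun e he => (hK e (Set.mem_toFinset.1 he)).1)
    (fun e he => Finset.disjoint_left.2 (fun a ha hb =>
      (Finset.mem_sdiff.1 hb).2 (Finset.mem_union_left _ ha)))
    (by
      intro e he e' he' hne hdis
      rw [Set.mem_toFinset] at he he'
      obtain ⟨-, hsub, -, -, -, -, a, b, hab, hne2, hnadj⟩ := hK e he
      obtain ⟨-, -, -, -, -, huniq, -⟩ := hK e' he'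
      have hin : ∀ c ∈ e.toFinset, c ∈ e'.toFinset ∪ K e' := by
        intro c hc
        by_contra hcon
        exact Finset.disjoint_left.1 hdis hc (Finset.mem_sdiff.2 ⟨hsub hc, hcon⟩)
      apply hne
      rw [huniq a b hne2 hnadj (hin a (by simp [hab])) (hin b (by simp [hab])), hab])
  rcases S.toFinset.eq_empty_or_nonempty with hemp | ⟨e0, he0⟩
  · rw [hemp]; simp
  have hcB : ∀ e ∈ S.toFinset,
      (G.neighborFinset v \ (e.toFinset ∪ K e)).card + r = G.degree v := by
    intro e he
    obtain ⟨h2, hs1, hs2, hk, hdis, -, -⟩ := hK e (Set.mem_toFinset.1 he)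
    have h := Finset.card_sdiff_add_card_eq_card (Finset.union_subset hs1 hs2)
    rw [Finset.card_union_of_disjoint hdis, h2, hk, SimpleGraph.card_neighborFinset_eq_degree] at h
    omega
  have hd := hcB e0 he0
  set b := (G.neighborFinset v \ (e0.toFinset ∪ K e0)).card
  have hcB' : ∀ e ∈ S.toFinset, (2 : ℚ) /
      ((((G.neighborFinset v \ (e.toFinset ∪ K e)).card : ℚ) + 2) *
        ((G.neighborFinset v \ (e.toFinset ∪ K e)).card + 1)) =
      2 / (((b : ℚ) + 2) * (b + 1)) := by
    intro e he
    have : (G.neighborFinset v \ (e.toFinset ∪ K e)).card = b := by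
      have := hcB e he
      omega
    rw [this]
  rw [Finset.sum_congr rfl hcB', Finset.sum_const, nsmul_eq_mul, ← mul_div_assoc,
    div_le_one (by positivity)] at main
  have hdeg : G.degree v + 2 - r = b + 2 := by omega
  rw [hdeg, Nat.choose_two_right, Nat.le_div_iff_mul_le (by norm_num)]
  exact_mod_cast main
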